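/- Assume Hypothesis 3.1 and the setting of Lemma 3.3, with Ξ₊(λ), Ξ₋(λ) the spectral shift operators associated with Φ₊(z), Φ̃₋(z). Then for a.e. λ ∈ ℝ one has convergence in trace norm of the boundary values: lim_{ε↓0} ‖Ξ₊(λ) − π⁻¹ Im(log(Φ₊(λ + iε)))‖_{B₁(H₊)} = 0 and lim_{ε↓0} ‖Ξ₋(λ) + π⁻¹ Im(log(Φ̃₋(λ + iε)))‖_{B₁(H₋)} = 0. -/

import Mathlib

open Complex Filter MeasureTheory TopologicalSpace ContinuousLinearMap
open scoped InnerProductSpace Topology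

noncomputable section

namespace SpectralShift

variable {H : Type*} [NormedAddCommGroup H] [InnerProductSpace ℂ H] [CompleteSpace H]

/-- The imaginary part `(T - T*)/(2i)` of a bounded operator. -/
def imPart (T : H →L[ℂ] H) : H →L[ℂ] H :=
  ((2 * Complex.I)⁻¹ : ℂ) • (T - ContinuousLinearMap.adjoint T)

/-- An operator-valued Herglotz function: analytic on the open upper half-plane with
nonnegative imaginary part there. -/
def IsHerglotz (M : ℂ → H →L[ℂ] H) : Prop :=
  DifferentiableOn ℂ M {z : ℂ | 0 < z.im} ∧ ∀ z : ℂ, 0 < z.im → (imPart (M z)).IsPositive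

/-- The integrand `(T + iλ)⁻¹ - (1 + iλ)⁻¹ I` in the integral representation of `log T`. -/
def logIntegrand (T : H →L[ℂ] H) (t : ℝ) : H →L[ℂ] H :=
  Ring.inverse (T + ((t : ℂ) * Complex.I) • (1 : H →L[ℂ] H)) -
    (((1 : ℂ) + (t : ℂ) * Complex.I)⁻¹) • (1 : H →L[ℂ] H)

/-- `log T = -i ∫₀^∞ ((T + iλ)⁻¹ - (1 + iλ)⁻¹ I) dλ` as a norm-convergent improper
Riemann integral, for a dissipative boundedly invertible `T`. -/
def opLog (T : H →L[ℂ] H) : H →L[ℂ] H :=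
  limUnder atTop (fun R : ℝ => (-Complex.I) • ∫ t in (0:ℝ)..R, logIntegrand T t)

/-- The logarithm `log S = (log S*)*` of an operator `S` with `-S` dissipative. -/
def opLogAnti (T : H →L[ℂ] H) : H →L[ℂ] H :=
  ContinuousLinearMap.adjoint (opLog (ContinuousLinearMap.adjoint T))

/-- The logarithm of a Herglotz-type operator family on `ℂ ∖ ℝ`, using `log T` in the
upper half-plane and the convention `log S = (log S*)*` in the lower half-plane. -/
def logHerg (Φ : ℂ → H →L[ℂ] H) (z : ℂ) : H →L[ℂ] H :=
  if 0 < z.im then opLog (Φ z) else opLogAnti (Φ z)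

/-- The logarithm of an anti-Herglotz-type operator family on `ℂ ∖ ℝ` (nonpositive
imaginary part in the upper half-plane). -/
def logAntiHerg (Φ : ℂ → H →L[ℂ] H) (z : ℂ) : H →L[ℂ] H :=
  if 0 < z.im then opLogAnti (Φ z) else opLog (Φ z)

/-- Trace class: absolute summability of the diagonal in every Hilbert basis. -/
def IsTraceClass (T : H →L[ℂ] H) : Prop :=
  ∀ (w : Set H) (b : HilbertBasis w ℂ H), Summable fun i => ‖⟪(b i : H), T (b i)⟫_ℂ‖

/-- The trace, computed in a fixed Hilbert basis (basis-independent for trace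
class operators). -/
def trH (T : H →L[ℂ] H) : ℂ :=
  ∑' i, ⟪((exists_hilbertBasis ℂ H).choose_spec.choose i : H),
    T ((exists_hilbertBasis ℂ H).choose_spec.choose i)⟫_ℂ

/-- The trace norm, via duality with bounded operators (the correct value for trace
class operators). -/
def traceNorm (T : H →L[ℂ] H) : ℝ :=
  ⨆ B : {B : H →L[ℂ] H // ‖B‖ ≤ 1}, ‖trH (T * (B : H →L[ℂ] H))‖

/-- Hilbert-Schmidt operators. -/
def IsHilbertSchmidt (K : H →L[ℂ] H) : Prop :=
  ∀ (w : Set H) (b : HilbertBasis w ℂ H), Summable fun i => ‖K (b i)‖ ^ 2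

/-- A (possibly unbounded) self-adjoint operator in `H`: a densely defined symmetric
operator possessing everywhere-defined bounded resolvents at every non-real point. -/
structure SelfAdjointOp (H : Type*) [NormedAddCommGroup H] [InnerProductSpace ℂ H]
    [CompleteSpace H] where
  dom : Submodule ℂ H
  dense_dom : Dense (dom : Set H)
  op : dom →ₗ[ℂ] H
  symmetric : ∀ x y : dom, ⟪op x, (y : H)⟫_ℂ = ⟪(x : H), op y⟫_ℂ
  resolvent : ℂ → H →L[ℂ] H
  resolvent_mem : ∀ {z : ℂ}, z.im ≠ 0 → ∀ x : H, resolvent z x ∈ dom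
  op_resolvent : ∀ {z : ℂ} (hz : z.im ≠ 0) (x : H),
    op ⟨resolvent z x, resolvent_mem hz x⟩ - z • resolvent z x = x
  resolvent_op : ∀ {z : ℂ} (hz : z.im ≠ 0) (x : dom),
    resolvent z (op x - z • (x : H)) = x

/-- `B = A + V` for a bounded operator `V` (with `dom B = dom A`). -/
def IsSumOf (B A : SelfAdjointOp H) (V : H →L[ℂ] H) : Prop :=
  B.dom = A.dom ∧ ∀ (x : H) (hxB : x ∈ B.dom) (hxA : x ∈ A.dom),
    B.op ⟨x, hxB⟩ = A.op ⟨x, hxA⟩ + V x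

/-- `R` is the (bounded, everywhere defined) resolvent `(A - z)⁻¹` of `A` at `z`. -/
def SelfAdjointOp.IsResolventAt (A : SelfAdjointOp H) (z : ℂ) (R : H →L[ℂ] H) : Prop :=
  (∀ x : H, R x ∈ A.dom) ∧
  (∀ (x : H) (hx : R x ∈ A.dom), A.op ⟨R x, hx⟩ - z • R x = x) ∧
  (∀ x : A.dom, R (A.op x - z • (x : H)) = x)

/-- `E` is the projection-valued spectral measure of the self-adjoint operator `A`. -/
def IsSpectralMeasure (A : SelfAdjointOp H) (E : Set ℝ → H →L[ℂ] H) : Prop :=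
  (∀ B : Set ℝ, MeasurableSet B → IsSelfAdjoint (E B)) ∧
  (∀ B C : Set ℝ, MeasurableSet B → MeasurableSet C → E B * E C = E (B ∩ C)) ∧
  (E Set.univ = 1) ∧
  (∀ (f : ℕ → Set ℝ), (∀ n, MeasurableSet (f n)) → Pairwise (Function.onFun Disjoint f) →
    ∀ x : H, HasSum (fun n => E (f n) x) (E (⋃ n, f n) x)) ∧
  ∃ μ : H → Measure ℝ,
    (∀ (f : H) (B : Set ℝ), MeasurableSet B → μ f B = ENNReal.ofReal (⟪f, E B f⟫_ℂ).re) ∧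
    ∀ (z : ℂ), z.im ≠ 0 → ∀ f : H,
      ⟪f, A.resolvent z f⟫_ℂ = ∫ l : ℝ, ((l : ℂ) - z)⁻¹ ∂(μ f)

/-- Invertibility of `T` restricted to the range of the orthogonal projection `P`
(for `T` commuting with `P`), with inverse `S` supported in `ran P`. -/
def InvertibleOn (T P : H →L[ℂ] H) : Prop :=
  ∃ S : H →L[ℂ] H, S * P = S ∧ P * S = S ∧ S * (T * P) = P ∧ (P * T) * S = P

/-- The spectral projection `J₊ = (I + J)/2` onto `H₊` for a self-adjoint unitary `J`. -/
def Jplus (J : H →L[ℂ] H) : H →L[ℂ] H := ((2 : ℂ)⁻¹) • (1 + J)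

/-- The spectral projection `J₋ = (I - J)/2` onto `H₋` for a self-adjoint unitary `J`. -/
def Jminus (J : H →L[ℂ] H) : H →L[ℂ] H := ((2 : ℂ)⁻¹) • (1 - J)

/-- `Φ₊(z) = I + J₊ K* (H₀ - z)⁻¹ K J₊`, the operator on `H` inducing `Φ₊(z)` on `H₊`
(and the identity on `H₋`). -/
def PhiPlus (H0 : SelfAdjointOp H) (J K : H →L[ℂ] H) (z : ℂ) : H →L[ℂ] H :=
  1 + Jplus J * (ContinuousLinearMap.adjoint K * H0.resolvent z * K) * Jplus J

/-- `Φ̃₋(z) = I - J₋ K* (H₊ - z)⁻¹ K J₋`, the operator on `H` inducing `Φ̃₋(z)` on `H₋`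
(and the identity on `H₊`). -/
def PhiMinusT (Hp : SelfAdjointOp H) (J K : H →L[ℂ] H) (z : ℂ) : H →L[ℂ] H :=
  1 - Jminus J * (ContinuousLinearMap.adjoint K * Hp.resolvent z * K) * Jminus J

/-!
The logarithm of `Φ` is the Cauchy transform of the operator family `Ξ`, so `π⁻¹ Im log Φ(λ + iε)`
is the Poisson integral of `Ξ` and is again a positive operator. By Lebesgue differentiation its
matrix entries converge almost everywhere to those of `Ξ(λ)`, and so does its trace as soon as
`∫ tr Ξ` is finite. For positive operators, convergence of the matrix entries together with
convergence of the traces forces convergence in trace norm (Grümm).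

Finiteness of `∫ tr Ξ` comes from the decay `|⟪f, log Φ(iy) f⟫| ≤ π ‖L f‖² / y` for
`Φ(z) = 1 ± L* (A - z)⁻¹ L`: by Fatou `∫ ⟪f, Ξ f⟫` is at most a constant times `‖L f‖²`, which is
summable over a Hilbert basis because `L` is Hilbert–Schmidt.
-/

section PoissonKernel

open scoped Real

/-- The Poisson kernel `y ↦ π⁻¹ ε / ((y - x) ^ 2 + ε ^ 2)` of the upper half-plane at the point
`x + iε`, normalised to have total mass one. -/
def poissonKernel (x ε y : ℝ) : ℝ := π⁻¹ * (ε / ((y - x) ^ 2 + ε ^ 2))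

variable {x ε : ℝ}

lemma poissonKernel_nonneg (hε : 0 ≤ ε) (y : ℝ) : 0 ≤ poissonKernel x ε y := by
  unfold poissonKernel
  positivity

lemma poissonKernel_eq_mul_inv (hε : ε ≠ 0) (y : ℝ) :
    poissonKernel x ε y = (π * ε)⁻¹ * (1 + (|y - x| / ε) ^ 2)⁻¹ := by
  rw [div_pow, sq_abs]
  unfold poissonKernel
  field_simp
  ring

lemma poissonKernel_le (hε : 0 < ε) (y : ℝ) : poissonKernel x ε y ≤ (π * ε)⁻¹ := by
  rw [poissonKernel_eq_mul_inv hε.ne']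
  exact mul_le_of_le_one_right (by positivity)
    (inv_le_one_of_one_le₀ (le_add_of_nonneg_right (sq_nonneg _)))

lemma continuous_poissonKernel (hε : ε ≠ 0) : Continuous (poissonKernel x ε) := by
  unfold poissonKernel
  have hden (y : ℝ) : (y - x) ^ 2 + ε ^ 2 ≠ 0 := by positivity
  exact continuous_const.mul (continuous_const.div (by fun_prop) hden)

variable {E : Type*} [NormedAddCommGroup E] [NormedSpace ℝ E] {h : ℝ → E}

lemma integrable_poissonKernel_smul (hε : 0 < ε) (hh : Integrable h) :
    Integrable fun y => poissonKernel x ε y • h y := by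
  refine hh.bdd_smul (π * ε)⁻¹ (continuous_poissonKernel hε.ne').aestronglyMeasurable
    (ae_of_all _ fun y => ?_)
  rw [Real.norm_of_nonneg (poissonKernel_nonneg hε.le y)]
  exact poissonKernel_le hε y

lemma hasDerivAt_one_add_sq (s : ℝ) : HasDerivAt (fun s : ℝ => 1 + s ^ 2) (2 * s) s := by
  simpa using (hasDerivAt_pow 2 s).const_add 1

lemma hasDerivAt_neg_inv_one_add_sq (s : ℝ) :
    HasDerivAt (fun s : ℝ => -(1 + s ^ 2)⁻¹) (2 * s / (1 + s ^ 2) ^ 2) s :=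
  ((hasDerivAt_one_add_sq s).inv (by positivity)).neg.congr_deriv (by ring)

lemma tendsto_inv_one_add_sq_atTop : Tendsto (fun s : ℝ => (1 + s ^ 2)⁻¹) atTop (𝓝 0) :=
  tendsto_inv_atTop_zero.comp (tendsto_atTop_add_const_left _ _ (tendsto_pow_atTop two_ne_zero))

lemma integrableOn_Ioi_two_mul_div_one_add_sq_sq :
    IntegrableOn (fun s : ℝ => 2 * s / (1 + s ^ 2) ^ 2) (Set.Ioi 0) :=
  integrableOn_Ioi_deriv_of_nonneg' (fun s _ => hasDerivAt_neg_inv_one_add_sq s)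
    (fun s (hs : 0 < s) => by positivity) tendsto_inv_one_add_sq_atTop.neg

lemma integral_Ioi_two_mul_div_one_add_sq_sq {a : ℝ} (ha : 0 ≤ a) :
    ∫ s in Set.Ioi a, 2 * s / (1 + s ^ 2) ^ 2 = (1 + a ^ 2)⁻¹ := by
  rw [integral_Ioi_of_hasDerivAt_of_nonneg' (fun s _ => hasDerivAt_neg_inv_one_add_sq s)
    (fun s hs => by have : 0 < s := ha.trans_lt hs; positivity) tendsto_inv_one_add_sq_atTop.neg]
  ring

/-- The density of the probability measure on `(0, ∞)` which writes the Poisson kernel at scale `ε`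
as a mixture of the uniform densities on the intervals of radius `ε * s`. -/
def poissonMixingDensity (s : ℝ) : ℝ := 4 * s ^ 2 / (π * (1 + s ^ 2) ^ 2)

lemma poissonMixingDensity_nonneg (s : ℝ) : 0 ≤ poissonMixingDensity s := by
  unfold poissonMixingDensity
  positivity

lemma hasDerivAt_arctan_sub_div_one_add_sq (s : ℝ) :
    HasDerivAt (fun s : ℝ => 2 / π * (Real.arctan s - s / (1 + s ^ 2)))
      (poissonMixingDensity s) s := by
  have hdiv := (hasDerivAt_id' s).div (hasDerivAt_one_add_sq s) (by positivity)
  refine (((Real.hasDerivAt_arctan s).sub hdiv).const_mul (2 / π)).congr_deriv ?_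
  unfold poissonMixingDensity
  field_simp
  ring

lemma tendsto_arctan_sub_div_one_add_sq_atTop :
    Tendsto (fun s : ℝ => 2 / π * (Real.arctan s - s / (1 + s ^ 2))) atTop (𝓝 1) := by
  have h : Tendsto (fun s : ℝ => s / (1 + s ^ 2)) atTop (𝓝 0) := by
    refine squeeze_zero' ?_ ?_ tendsto_inv_atTop_zero
    · filter_upwards [eventually_gt_atTop 0] with s hs
      positivity
    · filter_upwards [eventually_gt_atTop 0] with s hs
      rw [inv_eq_one_div, div_le_div_iff₀ (by positivity) hs]
      nlinarith
  convert ((tendsto_nhds_of_tendsto_nhdsWithin Real.tendsto_arctan_atTop).sub h).const_mul (2 / π)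
    using 2
  field_simp
  ring

lemma integrableOn_Ioi_poissonMixingDensity : IntegrableOn poissonMixingDensity (Set.Ioi 0) :=
  integrableOn_Ioi_deriv_of_nonneg' (fun s _ => hasDerivAt_arctan_sub_div_one_add_sq s)
    (fun s _ => poissonMixingDensity_nonneg s) tendsto_arctan_sub_div_one_add_sq_atTop

lemma integral_Ioi_poissonMixingDensity : ∫ s in Set.Ioi 0, poissonMixingDensity s = 1 := by
  rw [integral_Ioi_of_hasDerivAt_of_nonneg' (fun s _ => hasDerivAt_arctan_sub_div_one_add_sq s)
    (fun s _ => poissonMixingDensity_nonneg s) tendsto_arctan_sub_div_one_add_sq_atTop]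
  simp

/-- The integrand, in the variables `(s, y)`, of the layer-cake decomposition of the Poisson
integral of `h`: integrating out `s > 0` gives `π ε` times the Poisson kernel times `h y`. -/
def poissonLayer (x ε : ℝ) (h : ℝ → E) : ℝ × ℝ → E :=
  {p : ℝ × ℝ | |p.2 - x| ≤ ε * p.1}.indicator fun p => (2 * p.1 / (1 + p.1 ^ 2) ^ 2) • h p.2

lemma integrable_poissonLayer (x ε : ℝ) (hh : Integrable h) :
    Integrable (poissonLayer x ε h) ((volume.restrict (Set.Ioi 0)).prod volume) :=
  (Integrable.smul_prod integrableOn_Ioi_two_mul_div_one_add_sq_sq hh).indicator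
    (isClosed_le (by fun_prop) (by fun_prop)).measurableSet

lemma integral_poissonLayer_left [CompleteSpace E] (hε : 0 < ε) (y : ℝ) :
    ∫ s in Set.Ioi 0, poissonLayer x ε h (s, y) = (π * ε) • poissonKernel x ε y • h y := by
  have hlayer (s : ℝ) : poissonLayer x ε h (s, y) =
      (Set.Ici (|y - x| / ε)).indicator (fun s => (2 * s / (1 + s ^ 2) ^ 2) • h y) s := by
    simp only [poissonLayer, Set.indicator, Set.mem_Ici, Set.mem_ofPred_eq, div_le_iff₀' hε]
  have hkernel : π * ε * poissonKernel x ε y =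
      ∫ s in Set.Ioi (|y - x| / ε), 2 * s / (1 + s ^ 2) ^ 2 := by
    rw [integral_Ioi_two_mul_div_one_add_sq_sq (by positivity), poissonKernel_eq_mul_inv hε.ne']
    field_simp
  simp_rw [hlayer]
  rw [← integral_Ici_eq_integral_Ioi, setIntegral_indicator measurableSet_Ici, Set.Ici_inter_Ici,
    sup_of_le_right (by positivity), integral_Ici_eq_integral_Ioi, integral_smul_const, ← hkernel,
    mul_smul]

lemma integral_poissonLayer_right (hε : 0 < ε) {s : ℝ} (hs : 0 < s) :
    ∫ y, poissonLayer x ε h (s, y) =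
      (π * ε) • poissonMixingDensity s • ⨍ y in Metric.closedBall x (ε * s), h y := by
  have hball : ∫ y, poissonLayer x ε h (s, y) =
      ∫ y in Metric.closedBall x (ε * s), (2 * s / (1 + s ^ 2) ^ 2) • h y :=
    integral_indicator (s := Metric.closedBall x (ε * s)) Metric.isClosed_closedBall.measurableSet
  rw [hball, integral_smul, setAverage_eq, Measure.real, Real.volume_closedBall,
    ENNReal.toReal_ofReal (by positivity), smul_smul, smul_smul]
  congr 1
  unfold poissonMixingDensity
  field_simp
  ring

lemma integrableOn_Ioi_poissonMixingDensity_smul_average (hε : 0 < ε) (hh : Integrable h) :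
    IntegrableOn (fun s => poissonMixingDensity s • ⨍ y in Metric.closedBall x (ε * s), h y)
      (Set.Ioi 0) := by
  have hint := (integrable_poissonLayer x ε hh).integral_prod_left
  refine (integrable_smul_iff (mul_pos Real.pi_pos hε).ne' _).1 (hint.congr ?_)
  filter_upwards [ae_restrict_mem measurableSet_Ioi] with s hs
    using integral_poissonLayer_right hε hs

lemma integral_poissonKernel_smul [CompleteSpace E] (hε : 0 < ε) (hh : Integrable h) :
    ∫ y, poissonKernel x ε y • h y =
      ∫ s in Set.Ioi 0, poissonMixingDensity s • ⨍ y in Metric.closedBall x (ε * s), h y := by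
  refine smul_right_injective E (mul_pos Real.pi_pos hε).ne' ?_
  simp only [← integral_smul, ← integral_poissonLayer_left hε]
  rw [← integral_integral_swap (f := fun s y => poissonLayer x ε h (s, y))
    (integrable_poissonLayer x ε hh)]
  exact setIntegral_congr_fun measurableSet_Ioi fun s hs => integral_poissonLayer_right hε hs

lemma exists_forall_norm_average_closedBall_le (hh : Integrable h) {v : E}
    (hv : Tendsto (fun r => ⨍ y in Metric.closedBall x r, h y) (𝓝[>] 0) (𝓝 v)) :
    ∃ C, ∀ r > 0, ‖⨍ y in Metric.closedBall x r, h y‖ ≤ C := by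
  obtain ⟨δ, hδ, near⟩ : ∃ δ > 0, ∀ r ∈ Set.Ioo 0 δ,
      ‖⨍ y in Metric.closedBall x r, h y‖ ≤ ‖v‖ + 1 :=
    mem_nhdsGT_iff_exists_Ioo_subset.1 (hv.norm.eventually_le_const (lt_add_one ‖v‖))
  refine ⟨max (‖v‖ + 1) ((2 * δ)⁻¹ * ∫ y, ‖h y‖), fun r hr => ?_⟩
  rcases lt_or_ge r δ with hrδ | hδr
  · exact (near r ⟨hr, hrδ⟩).trans (le_max_left _ _)
  · refine le_max_of_le_right ?_
    rw [setAverage_eq, norm_smul, norm_inv, Measure.real, Real.volume_closedBall,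
      ENNReal.toReal_ofReal (by positivity), Real.norm_of_nonneg (by positivity)]
    gcongr
    exact (norm_integral_le_integral_norm _).trans
      (setIntegral_le_integral hh.norm (ae_of_all _ fun _ => norm_nonneg _))

theorem tendsto_integral_poissonKernel_smul [CompleteSpace E] (hh : Integrable h) {v : E}
    (hv : Tendsto (fun r => ⨍ y in Metric.closedBall x r, h y) (𝓝[>] 0) (𝓝 v)) :
    Tendsto (fun ε => ∫ y, poissonKernel x ε y • h y) (𝓝[>] 0) (𝓝 v) := by
  obtain ⟨C, hC⟩ := exists_forall_norm_average_closedBall_le hh hv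
  rw [← one_smul ℝ v, ← integral_Ioi_poissonMixingDensity, ← integral_smul_const]
  refine Tendsto.congr' (eventually_mem_nhdsWithin.mono fun ε hε =>
    (integral_poissonKernel_smul hε hh).symm) ?_
  refine tendsto_integral_filter_of_dominated_convergence (fun s => poissonMixingDensity s * C)
    ?_ ?_ (integrableOn_Ioi_poissonMixingDensity.mul_const C) ?_
  · filter_upwards [self_mem_nhdsWithin] with ε hε
    exact (integrableOn_Ioi_poissonMixingDensity_smul_average hε hh).aestronglyMeasurable
  · filter_upwards [self_mem_nhdsWithin] with ε hε
    filter_upwards [ae_restrict_mem measurableSet_Ioi] with s hs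
    rw [norm_smul, Real.norm_of_nonneg (poissonMixingDensity_nonneg s)]
    exact mul_le_mul_of_nonneg_left (hC _ (mul_pos hε hs)) (poissonMixingDensity_nonneg s)
  · filter_upwards [ae_restrict_mem measurableSet_Ioi] with s hs
    refine tendsto_const_nhds.smul (hv.comp (tendsto_nhdsWithin_iff.2 ⟨?_, ?_⟩))
    · exact tendsto_nhdsWithin_of_tendsto_nhds ((continuous_mul_const s).tendsto' 0 0 (zero_mul s))
    · filter_upwards [self_mem_nhdsWithin] with ε hε using mul_pos (Set.mem_Ioi.1 hε) hs

theorem ae_tendsto_integral_poissonKernel_smul [CompleteSpace E] (hh : Integrable h) :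
    ∀ᵐ x, Tendsto (fun ε => ∫ y, poissonKernel x ε y • h y) (𝓝[>] 0) (𝓝 (h x)) := by
  filter_upwards [IsUnifLocDoublingMeasure.ae_tendsto_average volume hh.locallyIntegrable 0]
    with x hx
  exact tendsto_integral_poissonKernel_smul hh
    (hx (fun _ => x) id tendsto_id (Eventually.of_forall fun _ => by simp))

end PoissonKernel

section PoissonSeries

open scoped Real

lemma tsum_lintegral_enorm_ne_top {α ι E : Type*} {_ : MeasurableSpace α} {μ : Measure α}
    [NormedAddCommGroup E] {u : ι → α → E} (hu : ∀ i, Integrable (u i) μ)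
    (hs : Summable fun i => ∫ x, ‖u i x‖ ∂μ) : ∑' i, ∫⁻ x, ‖u i x‖ₑ ∂μ ≠ ⊤ := by
  simp_rw [← fun i => ofReal_integral_norm_eq_lintegral_enorm (hu i)]
  exact hs.tsum_ofReal_ne_top

lemma ae_summable_of_summable_integral_norm {α ι E : Type*} [Countable ι] {_ : MeasurableSpace α}
    {μ : Measure α} [NormedAddCommGroup E] [CompleteSpace E] {u : ι → α → E}
    (hu : ∀ i, Integrable (u i) μ) (hs : Summable fun i => ∫ x, ‖u i x‖ ∂μ) :
    ∀ᵐ x ∂μ, Summable fun i => u i x := by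
  have hp := summable_norm_of_tsum_eLpNorm_ne_top le_rfl (fun i => (hu i).aestronglyMeasurable)
    (by simpa only [eLpNorm_one_eq_lintegral_enorm] using tsum_lintegral_enorm_ne_top hu hs)
  filter_upwards [hp] with x hx using hx.of_norm

lemma integrable_tsum_of_summable_integral_norm {α ι : Type*} [Countable ι]
    {_ : MeasurableSpace α} {μ : Measure α} {u : ι → α → ℝ} (hu : ∀ i, Integrable (u i) μ)
    (hs : Summable fun i => ∫ x, ‖u i x‖ ∂μ) : Integrable (fun x => ∑' i, u i x) μ := by
  refine ⟨(AEMeasurable.tsum fun i => (hu i).aemeasurable).aestronglyMeasurable, ?_⟩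
  refine (lintegral_mono fun x => enorm_tsum_le_tsum_enorm).trans_lt ?_
  rw [lintegral_tsum fun i => (hu i).aestronglyMeasurable.enorm]
  exact (tsum_lintegral_enorm_ne_top hu hs).lt_top

variable {ι : Type*} [Countable ι] {u : ι → ℝ → ℝ}

lemma hasSum_integral_poissonKernel_smul (hu : ∀ i, Integrable (u i))
    (hs : Summable fun i => ∫ y, ‖u i y‖) (x : ℝ) {ε : ℝ} (hε : 0 < ε) :
    HasSum (fun i => ∫ y, poissonKernel x ε y • u i y)
      (∫ y, poissonKernel x ε y • ∑' i, u i y) := by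
  simp_rw [← tsum_const_smul'' (poissonKernel x ε _)]
  refine hasSum_integral_of_summable_integral_norm
    (fun i => integrable_poissonKernel_smul hε (hu i))
    ((hs.mul_left (π * ε)⁻¹).of_nonneg_of_le (fun i => integral_nonneg fun y => norm_nonneg _)
      fun i => ?_)
  rw [← integral_const_mul]
  refine integral_mono (integrable_poissonKernel_smul hε (hu i)).norm ((hu i).norm.const_mul _)
    fun y => ?_
  rw [norm_smul, Real.norm_of_nonneg (poissonKernel_nonneg hε.le y)]
  exact mul_le_mul_of_nonneg_right (poissonKernel_le hε y) (norm_nonneg _)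

theorem ae_tendsto_tsum_integral_poissonKernel_smul (hu : ∀ i, Integrable (u i))
    (hs : Summable fun i => ∫ y, ‖u i y‖) :
    ∀ᵐ x, Tendsto (fun ε => ∑' i, ∫ y, poissonKernel x ε y • u i y) (𝓝[>] 0)
      (𝓝 (∑' i, u i x)) := by
  filter_upwards [ae_tendsto_integral_poissonKernel_smul
    (integrable_tsum_of_summable_integral_norm hu hs)] with x hx
  refine hx.congr' ?_
  filter_upwards [self_mem_nhdsWithin] with ε hε
  exact (hasSum_integral_poissonKernel_smul hu hs x hε).tsum_eq.symm

end PoissonSeries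

section PoissonDecay

open scoped Real

lemma one_le_mul_poissonKernel_zero {y l : ℝ} (hy : 0 < y) (hl : |l| ≤ y) :
    1 ≤ 2 * π * y * poissonKernel 0 y l := by
  have hsq : l ^ 2 ≤ y ^ 2 := sq_le_sq.2 (hl.trans (le_abs_self y))
  have h : 2 * π * y * poissonKernel 0 y l = 2 * y ^ 2 / (l ^ 2 + y ^ 2) := by
    unfold poissonKernel
    field_simp
    ring
  rw [h, one_le_div (by positivity)]
  linarith

variable {u : ℝ → ℝ} {C : ℝ}

lemma integrableOn_closedBall_of_poissonKernel {y : ℝ} (hy : 0 < y)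
    (hu : AEStronglyMeasurable u) (hu0 : ∀ᵐ l, 0 ≤ u l)
    (hint : Integrable fun l => poissonKernel 0 y l * u l)
    (hle : ∫ l, poissonKernel 0 y l * u l ≤ C / y) :
    IntegrableOn u (Metric.closedBall 0 y) ∧ ∫ l in Metric.closedBall 0 y, u l ≤ 2 * π * C := by
  have hdom : ∀ᵐ l ∂volume.restrict (Metric.closedBall 0 y),
      u l ≤ 2 * π * y * (poissonKernel 0 y l * u l) := by
    filter_upwards [ae_restrict_of_ae hu0,
      ae_restrict_mem Metric.isClosed_closedBall.measurableSet] with l hl hmem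
    rw [← mul_assoc]
    exact le_mul_of_one_le_left hl
      (one_le_mul_poissonKernel_zero hy (by simpa using hmem))
  have hon : IntegrableOn u (Metric.closedBall 0 y) := by
    refine (hint.const_mul (2 * π * y)).integrableOn.mono' hu.restrict ?_
    filter_upwards [hdom, ae_restrict_of_ae hu0] with l hl h0
    rwa [Real.norm_of_nonneg h0]
  refine ⟨hon, ?_⟩
  calc ∫ l in Metric.closedBall 0 y, u l
      ≤ ∫ l in Metric.closedBall 0 y, 2 * π * y * (poissonKernel 0 y l * u l) :=
        setIntegral_mono_ae_restrict hon (hint.const_mul _).integrableOn hdom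
    _ ≤ ∫ l, 2 * π * y * (poissonKernel 0 y l * u l) := by
        refine setIntegral_le_integral (hint.const_mul _) (hu0.mono fun l hl => ?_)
        exact mul_nonneg (by positivity) (mul_nonneg (poissonKernel_nonneg hy.le l) hl)
    _ ≤ 2 * π * y * (C / y) := by
        rw [integral_const_mul]
        gcongr
    _ = 2 * π * C := by field_simp

theorem integrable_and_integral_le_of_poissonKernel_decay (hu : AEStronglyMeasurable u)
    (hu0 : ∀ᵐ l, 0 ≤ u l)
    (hint : ∀ᶠ y in atTop, Integrable (fun l => poissonKernel 0 y l * u l) ∧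
      ∫ l, poissonKernel 0 y l * u l ≤ C / y) :
    Integrable u ∧ ∫ l, u l ≤ 2 * π * C := by
  have hcover : AECover volume atTop (fun y : ℝ => Metric.closedBall (0 : ℝ) y) :=
    aecover_closedBall tendsto_id
  have hball := ((eventually_gt_atTop 0).and hint).mono fun y ⟨hy, h₁, h₂⟩ =>
    integrableOn_closedBall_of_poissonKernel hy hu hu0 h₁ h₂
  have hon (y : ℝ) : IntegrableOn u (Metric.closedBall 0 y) := by
    obtain ⟨y', hyy', h⟩ := ((eventually_ge_atTop y).and hball).exists
    exact h.1.mono_set (Metric.closedBall_subset_closedBall hyy')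
  have hu_int : Integrable u := hcover.integrable_of_integral_bounded_of_nonneg_ae (2 * π * C)
    hon hu0 (hball.mono fun y h => h.2)
  exact ⟨hu_int, le_of_tendsto (hcover.integral_tendsto_of_countably_generated hu_int)
    (hball.mono fun y h => h.2)⟩

end PoissonDecay

section HilbertSchmidt

variable {𝕜 E F ι κ : Type*} [RCLike 𝕜] [NormedAddCommGroup E] [InnerProductSpace 𝕜 E]
  [NormedAddCommGroup F] [InnerProductSpace 𝕜 F]

lemma countable_of_hilbertBasis [SeparableSpace E] (b : HilbertBasis ι 𝕜 E) : Countable ι := by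
  refine Pairwise.countable_of_isOpen_disjoint (s := fun i => Metric.ball (b i) (1 / 2))
    (fun i j hij => Metric.ball_disjoint_ball ?_) (fun _ => Metric.isOpen_ball)
    fun i => ⟨b i, Metric.mem_ball_self (by norm_num)⟩
  have hsq : ‖b i - b j‖ ^ 2 = 2 := by
    rw [norm_sub_sq (𝕜 := 𝕜), b.orthonormal.1 i, b.orthonormal.1 j, b.orthonormal.2 hij]
    norm_num
  rw [dist_eq_norm]
  nlinarith [norm_nonneg (b i - b j)]

lemma hasSum_norm_sq_inner (b : HilbertBasis ι 𝕜 E) (x : E) :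
    HasSum (fun i => ‖⟪b i, x⟫_𝕜‖ ^ 2) (‖x‖ ^ 2) := by
  have h := RCLike.hasSum_re 𝕜 (b.hasSum_inner_mul_inner x x)
  simpa only [inner_mul_symm_re_eq_norm, norm_mul, norm_inner_symm x, ← sq,
    inner_self_eq_norm_sq] using h

lemma tsum_enorm_sq_inner (b : HilbertBasis ι 𝕜 E) (x : E) :
    ∑' i, ‖⟪b i, x⟫_𝕜‖ₑ ^ 2 = ‖x‖ₑ ^ 2 := by
  have h := hasSum_norm_sq_inner b x
  simp only [← ofReal_norm, ← ENNReal.ofReal_pow (norm_nonneg _), ← h.tsum_eq]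
  exact (ENNReal.ofReal_tsum_of_nonneg (fun _ => by positivity) h.summable).symm

variable [CompleteSpace E] [CompleteSpace F]

lemma tsum_enorm_sq_adjoint (b : HilbertBasis ι 𝕜 E) (c : HilbertBasis κ 𝕜 F) (T : E →L[𝕜] F) :
    ∑' j, ‖adjoint T (c j)‖ₑ ^ 2 = ∑' i, ‖T (b i)‖ₑ ^ 2 := by
  simp_rw [← tsum_enorm_sq_inner b (adjoint T _), ← tsum_enorm_sq_inner c (T _)]
  rw [ENNReal.tsum_comm]
  refine tsum_congr fun i => tsum_congr fun j => ?_
  rw [adjoint_inner_right, enorm_eq_iff_norm_eq.2 (norm_inner_symm _ _)]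

lemma tsum_enorm_sq_comp_le (b : HilbertBasis ι 𝕜 E) (T : E →L[𝕜] E) (B : E →L[𝕜] E) :
    ∑' i, ‖(T * B) (b i)‖ₑ ^ 2 ≤ ‖B‖ₑ ^ 2 * ∑' i, ‖T (b i)‖ₑ ^ 2 := by
  rw [← tsum_enorm_sq_adjoint b b (T * B), ← tsum_enorm_sq_adjoint b b T, ← ENNReal.tsum_mul_left]
  refine ENNReal.tsum_le_tsum fun i => ?_
  rw [← mul_pow, ← star_eq_adjoint, star_mul]
  gcongr
  exact ((star B).le_opENorm _).trans_eq (by rw [enorm_eq_iff_norm_eq.2 (norm_star B)]; rfl)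

lemma summable_norm_sq_mul_and_tsum_le (b : HilbertBasis ι 𝕜 E) {T : E →L[𝕜] E}
    (hT : Summable fun i => ‖T (b i)‖ ^ 2) (B : E →L[𝕜] E) :
    (Summable fun i => ‖(T * B) (b i)‖ ^ 2) ∧
      ∑' i, ‖(T * B) (b i)‖ ^ 2 ≤ ‖B‖ ^ 2 * ∑' i, ‖T (b i)‖ ^ 2 := by
  have hle := tsum_enorm_sq_comp_le b T B
  simp only [← ofReal_norm, ← ENNReal.ofReal_pow (norm_nonneg _)] at hle
  rw [← ENNReal.ofReal_tsum_of_nonneg (fun _ => by positivity) hT,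
    ← ENNReal.ofReal_mul (by positivity)] at hle
  have hs : Summable fun i => ‖(T * B) (b i)‖ ^ 2 := by
    refine (ENNReal.summable_toReal (hle.trans_lt ENNReal.ofReal_lt_top).ne).congr fun i => ?_
    exact ENNReal.toReal_ofReal (by positivity)
  rw [← ENNReal.ofReal_tsum_of_nonneg (fun _ => by positivity) hs,
    ENNReal.ofReal_le_ofReal_iff (by positivity)] at hle
  exact ⟨hs, hle⟩

end HilbertSchmidt

lemma isHilbertSchmidt_mul_right {K : H →L[ℂ] H} (hK : IsHilbertSchmidt K) (B : H →L[ℂ] H) :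
    IsHilbertSchmidt (K * B) :=
  fun w b => (summable_norm_sq_mul_and_tsum_le b (hK w b) B).1

section DiagTail

variable {E ι : Type*} [NormedAddCommGroup E] [InnerProductSpace ℂ E]

/-- The part `∑_{i ∉ F} ⟪A bᵢ, bᵢ⟫` of the trace of `A` in the Hilbert basis `b` coming from
outside the finite index set `F`. -/
def diagTail (b : HilbertBasis ι ℂ E) (A : E →L[ℂ] E) (F : Finset ι) : ℝ :=
  ∑' i : {i // i ∉ F}, A.reApplyInnerSelf (b i)

lemma sum_add_diagTail {b : HilbertBasis ι ℂ E} {A : E →L[ℂ] E}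
    (hs : Summable fun i => A.reApplyInnerSelf (b i)) (F : Finset ι) :
    ∑ i ∈ F, A.reApplyInnerSelf (b i) + diagTail b A F = ∑' i, A.reApplyInnerSelf (b i) :=
  hs.sum_add_tsum_subtype_compl F

lemma tendsto_diagTail_atTop (b : HilbertBasis ι ℂ E) (A : E →L[ℂ] E) :
    Tendsto (diagTail b A) atTop (𝓝 0) :=
  tendsto_tsum_compl_atTop_zero fun i => A.reApplyInnerSelf (b i)

variable {α : Type*} {l : Filter α} {b : HilbertBasis ι ℂ E} {A : E →L[ℂ] E} {M : α → E →L[ℂ] E}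

lemma tendsto_reApplyInnerSelf_of_inner {x : E}
    (h : Tendsto (fun a => ⟪x, M a x⟫_ℂ) l (𝓝 ⟪x, A x⟫_ℂ)) :
    Tendsto (fun a => (M a).reApplyInnerSelf x) l (𝓝 (A.reApplyInnerSelf x)) := by
  simp only [reApplyInnerSelf_apply, inner_re_symm (𝕜 := ℂ) _ x]
  exact (RCLike.continuous_re.tendsto _).comp h

lemma tendsto_diagTail (hA : Summable fun i => A.reApplyInnerSelf (b i))
    (hM : ∀ᶠ a in l, Summable fun i => (M a).reApplyInnerSelf (b i))
    (htrace : Tendsto (fun a => ∑' i, (M a).reApplyInnerSelf (b i)) l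
      (𝓝 (∑' i, A.reApplyInnerSelf (b i))))
    (hentry : ∀ i j, Tendsto (fun a => ⟪b i, M a (b j)⟫_ℂ) l (𝓝 ⟪b i, A (b j)⟫_ℂ))
    (F : Finset ι) : Tendsto (fun a => diagTail b (M a) F) l (𝓝 (diagTail b A F)) := by
  have hhead := tendsto_finsetSum F fun i _ => tendsto_reApplyInnerSelf_of_inner (hentry i i)
  rw [eq_sub_of_add_eq' (sum_add_diagTail hA F)]
  refine (htrace.sub hhead).congr' ?_
  filter_upwards [hM] with a ha using (eq_sub_of_add_eq' (sum_add_diagTail ha F)).symm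

end DiagTail

lemma summable_mul_and_tsum_mul_le_sqrt {ι : Type*} {f g : ι → ℝ} (hf : ∀ i, 0 ≤ f i)
    (hg : ∀ i, 0 ≤ g i) (hfs : Summable fun i => f i ^ 2)
    (hgs : Summable fun i => g i ^ 2) :
    (Summable fun i => f i * g i) ∧
      ∑' i, f i * g i ≤ √((∑' i, f i ^ 2) * ∑' i, g i ^ 2) := by
  have h := Real.summable_and_inner_le_Lp_mul_Lq_tsum_of_nonneg Real.HolderConjugate.two_two hf hg
    (by simpa only [Real.rpow_two] using hfs) (by simpa only [Real.rpow_two] using hgs)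
  rw [Real.sqrt_mul (tsum_nonneg fun i => sq_nonneg _)]
  simpa only [Real.rpow_two, Real.sqrt_eq_rpow] using h

section PositiveOperator

variable {A A' : H →L[ℂ] H} {ι : Type*}

lemma inner_apply_eq_inner_sqrt (hA : A.IsPositive) (x y : H) :
    ⟪x, A y⟫_ℂ = ⟪CFC.sqrt A x, CFC.sqrt A y⟫_ℂ := by
  have hsqrt := (nonneg_iff_isPositive _).1 (CFC.sqrt_nonneg A)
  conv_lhs => rw [← CFC.sqrt_mul_sqrt_self A ((nonneg_iff_isPositive A).2 hA)]
  exact (hsqrt.inner_left_eq_inner_right x _).symm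

lemma reApplyInnerSelf_eq_norm_sq_sqrt (hA : A.IsPositive) (x : H) :
    A.reApplyInnerSelf x = ‖CFC.sqrt A x‖ ^ 2 := by
  rw [reApplyInnerSelf_apply, inner_re_symm, inner_apply_eq_inner_sqrt hA, inner_self_eq_norm_sq]

lemma norm_inner_apply_sq_le (hA : A.IsPositive) (x y : H) :
    ‖⟪x, A y⟫_ℂ‖ ^ 2 ≤ A.reApplyInnerSelf x * A.reApplyInnerSelf y := by
  rw [inner_apply_eq_inner_sqrt hA, reApplyInnerSelf_eq_norm_sq_sqrt hA,
    reApplyInnerSelf_eq_norm_sq_sqrt hA, ← mul_pow]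
  gcongr
  exact norm_inner_le_norm _ _

lemma inner_apply_self_eq_reApplyInnerSelf (hA : A.IsPositive) (x : H) :
    ⟪x, A x⟫_ℂ = A.reApplyInnerSelf x := by
  rw [inner_apply_eq_inner_sqrt hA, reApplyInnerSelf_eq_norm_sq_sqrt hA, inner_self_eq_norm_sq_to_K]
  norm_cast

variable (b : HilbertBasis ι ℂ H)

lemma tsum_compl_norm_inner_sub_sq_le (hA : A.IsPositive) (hA' : A'.IsPositive)
    (hs : Summable fun i => A.reApplyInnerSelf (b i))
    (hs' : Summable fun i => A'.reApplyInnerSelf (b i)) (F : Finset ι) (x : H) :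
    ∑' i : {i // i ∉ F}, ‖⟪b i, (A - A') x⟫_ℂ‖ ^ 2 ≤
      2 * (A.reApplyInnerSelf x * diagTail b A F + A'.reApplyInnerSelf x * diagTail b A' F) := by
  have hentry (i : ι) : ‖⟪b i, (A - A') x⟫_ℂ‖ ^ 2 ≤ 2 * (A.reApplyInnerSelf x *
      A.reApplyInnerSelf (b i) + A'.reApplyInnerSelf x * A'.reApplyInnerSelf (b i)) := by
    rw [sub_apply, inner_sub_right]
    calc ‖⟪b i, A x⟫_ℂ - ⟪b i, A' x⟫_ℂ‖ ^ 2 ≤ (‖⟪b i, A x⟫_ℂ‖ + ‖⟪b i, A' x⟫_ℂ‖) ^ 2 := by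
          gcongr
          exact norm_sub_le _ _
      _ ≤ 2 * (‖⟪b i, A x⟫_ℂ‖ ^ 2 + ‖⟪b i, A' x⟫_ℂ‖ ^ 2) := add_sq_le
      _ ≤ _ := by
          rw [mul_comm (A.reApplyInnerSelf x), mul_comm (A'.reApplyInnerSelf x)]
          gcongr
          · exact norm_inner_apply_sq_le hA _ _
          · exact norm_inner_apply_sq_le hA' _ _
  have hsum : Summable fun i : {i // i ∉ F} => A.reApplyInnerSelf x * A.reApplyInnerSelf (b i) :=
    (hs.subtype {i | i ∉ F}).mul_left _
  have hsum' : Summable fun i : {i // i ∉ F} =>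
      A'.reApplyInnerSelf x * A'.reApplyInnerSelf (b i) := (hs'.subtype {i | i ∉ F}).mul_left _
  have hparseval : Summable fun i : {i // i ∉ F} => ‖⟪b i, (A - A') x⟫_ℂ‖ ^ 2 :=
    (hasSum_norm_sq_inner b _).summable.subtype {i | i ∉ F}
  refine (Summable.tsum_le_tsum (fun i : {i // i ∉ F} => hentry i) hparseval
    ((hsum.add hsum').mul_left 2)).trans_eq ?_
  exact tsum_mul_left.trans
    (congrArg _ ((hsum.tsum_add hsum').trans (congrArg₂ _ tsum_mul_left tsum_mul_left)))

lemma norm_sub_apply_sq_le (hA : A.IsPositive) (hA' : A'.IsPositive)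
    (hs : Summable fun i => A.reApplyInnerSelf (b i))
    (hs' : Summable fun i => A'.reApplyInnerSelf (b i)) (F : Finset ι) (x : H) :
    ‖(A - A') x‖ ^ 2 ≤ ∑ i ∈ F, ‖⟪b i, (A - A') x⟫_ℂ‖ ^ 2 +
      2 * (A.reApplyInnerSelf x * diagTail b A F + A'.reApplyInnerSelf x * diagTail b A' F) := by
  have hparseval := hasSum_norm_sq_inner b ((A - A') x)
  rw [← hparseval.tsum_eq, ← hparseval.summable.sum_add_tsum_subtype_compl F]
  gcongr
  exact tsum_compl_norm_inner_sub_sq_le b hA hA' hs hs' F x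

lemma summable_inner_mul_and_tsum_compl_le (hA : A.IsPositive)
    (hs : Summable fun i => A.reApplyInnerSelf (b i)) {B : H →L[ℂ] H} (hB : ‖B‖ ≤ 1)
    (F : Finset ι) :
    (Summable fun i => ‖⟪b i, (A * B) (b i)⟫_ℂ‖) ∧
      ∑' i : {i // i ∉ F}, ‖⟪b i, (A * B) (b i)⟫_ℂ‖ ≤
        √(diagTail b A F * ∑' i, A.reApplyInnerSelf (b i)) := by
  have hsqrt := hs.congr fun i => reApplyInnerSelf_eq_norm_sq_sqrt hA (b i)
  obtain ⟨hsB, hleB⟩ := summable_norm_sq_mul_and_tsum_le b hsqrt B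
  have hentry (i : ι) : ‖⟪b i, (A * B) (b i)⟫_ℂ‖ ≤
      ‖CFC.sqrt A (b i)‖ * ‖(CFC.sqrt A * B) (b i)‖ :=
    (congrArg norm (inner_apply_eq_inner_sqrt hA _ _)).trans_le (norm_inner_le_norm _ _)
  have hsum : Summable fun i => ‖⟪b i, (A * B) (b i)⟫_ℂ‖ :=
    (summable_mul_and_tsum_mul_le_sqrt (fun i => norm_nonneg _) (fun i => norm_nonneg _)
      hsqrt hsB).1.of_nonneg_of_le (fun i => norm_nonneg _) hentry
  have hsumF : Summable fun i : {i // i ∉ F} => ‖⟪b i, (A * B) (b i)⟫_ℂ‖ :=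
    hsum.subtype {i | i ∉ F}
  obtain ⟨hsF, hleF⟩ := summable_mul_and_tsum_mul_le_sqrt (fun i => norm_nonneg _)
    (fun i => norm_nonneg _) (hsqrt.subtype {i | i ∉ F}) (hsB.subtype {i | i ∉ F})
  refine ⟨hsum, (Summable.tsum_le_tsum (fun i : {i // i ∉ F} => hentry i) hsumF hsF).trans
    (hleF.trans (Real.sqrt_le_sqrt ?_))⟩
  simp only [diagTail, reApplyInnerSelf_eq_norm_sq_sqrt hA]
  refine mul_le_mul_of_nonneg_left ?_ (tsum_nonneg fun i => sq_nonneg _)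
  exact ((hsB.tsum_subtype_le _ {i | i ∉ F} (fun i => sq_nonneg _)).trans hleB).trans <|
    mul_le_of_le_one_left (tsum_nonneg fun i => sq_nonneg _) (pow_le_one₀ (norm_nonneg _) hB)

end PositiveOperator

section Grumm

lemma tendsto_zero_of_forall_eventually_le {α κ : Type*} {l : Filter α} {m : Filter κ} [m.NeBot]
    {f : α → ℝ} {g : κ → α → ℝ} {G : κ → ℝ} (hf : ∀ a, 0 ≤ f a)
    (hfg : ∀ k, ∀ᶠ a in l, f a ≤ g k a) (hg : ∀ k, Tendsto (g k) l (𝓝 (G k)))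
    (hG : Tendsto G m (𝓝 0)) : Tendsto f l (𝓝 0) := by
  refine tendsto_order.2 ⟨fun c hc => .of_forall fun a => hc.trans_le (hf a), fun c hc => ?_⟩
  obtain ⟨k, hk⟩ := (hG.eventually_lt_const hc).exists
  filter_upwards [hfg k, (hg k).eventually_lt_const hk] with a hle hlt using hle.trans_lt hlt

section HilbertBasis

variable {α ι : Type*} {l : Filter α} {b : HilbertBasis ι ℂ H} {A : H →L[ℂ] H}
  {M : α → H →L[ℂ] H}

lemma tendsto_norm_sub_apply_basis (hA : A.IsPositive)
    (hAs : Summable fun i => A.reApplyInnerSelf (b i)) (hM : ∀ᶠ a in l, (M a).IsPositive)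
    (hMs : ∀ᶠ a in l, Summable fun i => (M a).reApplyInnerSelf (b i))
    (htrace : Tendsto (fun a => ∑' i, (M a).reApplyInnerSelf (b i)) l
      (𝓝 (∑' i, A.reApplyInnerSelf (b i))))
    (hentry : ∀ i j, Tendsto (fun a => ⟪b i, M a (b j)⟫_ℂ) l (𝓝 ⟪b i, A (b j)⟫_ℂ)) (j : ι) :
    Tendsto (fun a => ‖(A - M a) (b j)‖) l (𝓝 0) := by
  suffices hsq : Tendsto (fun a => ‖(A - M a) (b j)‖ ^ 2) l (𝓝 0) by
    simpa only [Real.sqrt_sq (norm_nonneg _), Real.sqrt_zero] using hsq.sqrt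
  have hdiag := tendsto_reApplyInnerSelf_of_inner (hentry j j)
  have hrest (i : ι) : Tendsto (fun a => ‖⟪b i, (A - M a) (b j)⟫_ℂ‖ ^ 2) l (𝓝 0) := by
    simpa [inner_sub_right] using ((hentry i j).const_sub ⟪b i, A (b j)⟫_ℂ).norm.pow 2
  refine tendsto_zero_of_forall_eventually_le (m := atTop) (fun a => sq_nonneg _)
    (fun F => (hM.and hMs).mono fun a ha => norm_sub_apply_sq_le b hA ha.1 hAs ha.2 F (b j))
    (fun F => (tendsto_finsetSum F fun i _ => hrest i).add <| Tendsto.const_mul 2 <|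
      tendsto_const_nhds.add (hdiag.mul (tendsto_diagTail hAs hMs htrace hentry F))) ?_
  have htail := (tendsto_diagTail_atTop b A).const_mul (A.reApplyInnerSelf (b j))
  simpa using (htail.add htail).const_mul 2

end HilbertBasis

/-- The Hilbert basis in which `trH` is computed. -/
def traceBasis : HilbertBasis (exists_hilbertBasis ℂ H).choose ℂ H :=
  (exists_hilbertBasis ℂ H).choose_spec.choose

lemma traceNorm_nonneg (T : H →L[ℂ] H) : 0 ≤ traceNorm T :=
  Real.iSup_nonneg fun _ => norm_nonneg _

lemma traceNorm_le_of_summable_of_tsum_le {T : H →L[ℂ] H} {C : ℝ}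
    (hT : ∀ B : H →L[ℂ] H, ‖B‖ ≤ 1 →
      (Summable fun i => ‖⟪(traceBasis i : H), (T * B) (traceBasis i)⟫_ℂ‖) ∧
        ∑' i, ‖⟪(traceBasis i : H), (T * B) (traceBasis i)⟫_ℂ‖ ≤ C) :
    traceNorm T ≤ C := by
  have : Nonempty {B : H →L[ℂ] H // ‖B‖ ≤ 1} := ⟨0, by simp⟩
  refine ciSup_le fun B => ?_
  obtain ⟨hs, hle⟩ := hT B B.2
  exact (norm_tsum_le_tsum_norm hs).trans hle

lemma traceNorm_sub_le {A A' : H →L[ℂ] H} (hA : A.IsPositive) (hA' : A'.IsPositive)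
    (hs : Summable fun i => A.reApplyInnerSelf (traceBasis i))
    (hs' : Summable fun i => A'.reApplyInnerSelf (traceBasis i)) (F : Finset _) :
    traceNorm (A - A') ≤ ∑ i ∈ F, ‖(A - A') (traceBasis i)‖ +
      (√(diagTail traceBasis A F * ∑' i, A.reApplyInnerSelf (traceBasis i)) +
        √(diagTail traceBasis A' F * ∑' i, A'.reApplyInnerSelf (traceBasis i))) := by
  refine traceNorm_le_of_summable_of_tsum_le fun B hB => ?_
  obtain ⟨hsum, htail⟩ := summable_inner_mul_and_tsum_compl_le traceBasis hA hs hB F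
  obtain ⟨hsum', htail'⟩ := summable_inner_mul_and_tsum_compl_le traceBasis hA' hs' hB F
  have hle (i) : ‖⟪(traceBasis i : H), ((A - A') * B) (traceBasis i)⟫_ℂ‖ ≤
      ‖⟪(traceBasis i : H), (A * B) (traceBasis i)⟫_ℂ‖ +
        ‖⟪(traceBasis i : H), (A' * B) (traceBasis i)⟫_ℂ‖ := by
    rw [sub_mul, sub_apply, inner_sub_right]
    exact norm_sub_le _ _
  have hsub : Summable fun i => ‖⟪(traceBasis i : H), ((A - A') * B) (traceBasis i)⟫_ℂ‖ :=
    (hsum.add hsum').of_nonneg_of_le (fun i => norm_nonneg _) hle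
  have hhead (i) : ‖⟪(traceBasis i : H), ((A - A') * B) (traceBasis i)⟫_ℂ‖ ≤
      ‖(A - A') (traceBasis i)‖ := by
    rw [mul_apply_eq_comp, ← (hA.isSelfAdjoint.sub hA'.isSelfAdjoint).isSymmetric.apply_clm]
    refine (norm_inner_le_norm _ _).trans (mul_le_of_le_one_right (norm_nonneg _) ?_)
    exact (B.le_of_opNorm_le hB _).trans_eq (by simp [traceBasis.orthonormal.1 i])
  refine ⟨hsub, ?_⟩
  rw [← hsub.sum_add_tsum_subtype_compl F]
  refine add_le_add (Finset.sum_le_sum fun i _ => hhead i) ?_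
  have hsumF := F.summable_compl_iff.2 hsum
  have hsumF' := F.summable_compl_iff.2 hsum'
  calc ∑' i : {i // i ∉ F}, ‖⟪(traceBasis i : H), ((A - A') * B) (traceBasis i)⟫_ℂ‖
      ≤ ∑' i : {i // i ∉ F}, (‖⟪(traceBasis i : H), (A * B) (traceBasis i)⟫_ℂ‖ +
          ‖⟪(traceBasis i : H), (A' * B) (traceBasis i)⟫_ℂ‖) :=
        Summable.tsum_le_tsum (fun i => hle i) (F.summable_compl_iff.2 hsub) (hsumF.add hsumF')
    _ = _ := hsumF.tsum_add hsumF'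
    _ ≤ _ := add_le_add htail htail'

theorem tendsto_traceNorm_sub_of_isPositive {α : Type*} {l : Filter α} {A : H →L[ℂ] H}
    {M : α → H →L[ℂ] H} (hA : A.IsPositive)
    (hAs : Summable fun i => A.reApplyInnerSelf (traceBasis i))
    (hM : ∀ᶠ a in l, (M a).IsPositive)
    (hMs : ∀ᶠ a in l, Summable fun i => (M a).reApplyInnerSelf (traceBasis i))
    (htrace : Tendsto (fun a => ∑' i, (M a).reApplyInnerSelf (traceBasis i)) l
      (𝓝 (∑' i, A.reApplyInnerSelf (traceBasis i))))
    (hentry : ∀ i j, Tendsto (fun a => ⟪(traceBasis i : H), M a (traceBasis j)⟫_ℂ) l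
      (𝓝 ⟪(traceBasis i : H), A (traceBasis j)⟫_ℂ)) :
    Tendsto (fun a => traceNorm (A - M a)) l (𝓝 0) := by
  have hcol (F : Finset _) := tendsto_finsetSum F fun i _ =>
    tendsto_norm_sub_apply_basis hA hAs hM hMs htrace hentry i
  refine tendsto_zero_of_forall_eventually_le (m := atTop) (fun a => traceNorm_nonneg _)
    (fun F => (hM.and hMs).mono fun a ha => traceNorm_sub_le hA ha.1 hAs ha.2 F)
    (fun F => (hcol F).add <| tendsto_const_nhds.add
      ((tendsto_diagTail hAs hMs htrace hentry F).mul htrace).sqrt) ?_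
  have htail := ((tendsto_diagTail_atTop traceBasis A).mul_const
    (∑' i, A.reApplyInnerSelf (traceBasis i))).sqrt
  simpa using htail.add htail

end Grumm

section Resolvent

lemma im_inner_resolvent (A : SelfAdjointOp H) {z : ℂ} (hz : z.im ≠ 0) (x : H) :
    (⟪A.resolvent z x, x⟫_ℂ).im = -(z.im * ‖A.resolvent z x‖ ^ 2) := by
  set u : A.dom := ⟨A.resolvent z x, A.resolvent_mem hz x⟩
  have hreal : (⟪(u : H), A.op u⟫_ℂ).im = 0 :=
    Complex.conj_eq_iff_im.1 ((inner_conj_symm _ _).trans (A.symmetric u u))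
  have hx : A.op u - z • (u : H) = x := A.op_resolvent hz x
  calc (⟪(u : H), x⟫_ℂ).im = (⟪(u : H), A.op u⟫_ℂ - z * (‖(u : H)‖ ^ 2 : ℝ)).im := by
        rw [← hx, inner_sub_right, inner_smul_right, inner_self_eq_norm_sq_to_K]
        norm_cast
    _ = -(z.im * ‖(u : H)‖ ^ 2) := by rw [Complex.sub_im, hreal, Complex.im_mul_ofReal, zero_sub]

lemma norm_resolvent_le (A : SelfAdjointOp H) {z : ℂ} (hz : z.im ≠ 0) :
    ‖A.resolvent z‖ ≤ |z.im|⁻¹ := by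
  refine opNorm_le_bound _ (by positivity) fun x => ?_
  have him : |z.im| * ‖A.resolvent z x‖ ^ 2 ≤ ‖A.resolvent z x‖ * ‖x‖ := by
    have h := (Complex.abs_im_le_norm _).trans (norm_inner_le_norm (𝕜 := ℂ) (A.resolvent z x) x)
    rwa [im_inner_resolvent A hz, abs_neg, abs_mul, abs_pow, abs_norm] at h
  rw [inv_mul_eq_div, le_div_iff₀' (abs_pos.2 hz)]
  rcases (norm_nonneg (A.resolvent z x)).eq_or_lt with h0 | hpos
  · rw [← h0, mul_zero]
    exact norm_nonneg x
  · exact le_of_mul_le_mul_right (by linarith) hpos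

end Resolvent

section OperatorLog

lemma sq_norm_one_add_mul_I (t : ℝ) : ‖(1 : ℂ) + t * I‖ ^ 2 = 1 + t ^ 2 := by
  simpa [Complex.sq_norm] using Complex.normSq_add_mul_I 1 t

lemma one_le_norm_one_add_mul_I (t : ℝ) : 1 ≤ ‖(1 : ℂ) + t * I‖ := by
  simpa using Complex.abs_re_le_norm ((1 : ℂ) + t * I)

lemma norm_inv_one_add_mul_I_sq (t : ℝ) : ‖((1 : ℂ) + t * I)⁻¹ ^ 2‖ = (1 + t ^ 2)⁻¹ := by
  rw [norm_pow, norm_inv, inv_pow, sq_norm_one_add_mul_I]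

lemma inverse_smul_one_add_sub {𝕜 A : Type*} [Field 𝕜] [Ring A] [Algebra 𝕜 A] {c : 𝕜}
    (hc : c ≠ 0) {X : A} (hX : IsUnit (c • 1 + X)) :
    Ring.inverse (c • 1 + X) - c⁻¹ • 1 = c⁻¹ ^ 2 • (X * Ring.inverse (c • 1 + X) * X - X) := by
  set S := Ring.inverse (c • 1 + X)
  have hright : c • S = 1 - X * S := by
    simpa [add_mul] using eq_sub_of_add_eq ((add_mul (c • 1) X S).symm.trans
      (Ring.mul_inverse_cancel _ hX))
  have hleft : c • S = 1 - S * X := by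
    simpa [mul_add] using eq_sub_of_add_eq ((mul_add S (c • 1) X).symm.trans
      (Ring.inverse_mul_cancel _ hX))
  have hXS : X * S = c⁻¹ • (X - X * S * X) := by
    rw [eq_inv_smul_iff₀ hc, ← mul_smul_comm, hleft, mul_sub, mul_one, mul_assoc]
  have hS : S = c⁻¹ • (1 - X * S) := by rw [eq_inv_smul_iff₀ hc, hright]
  calc S - c⁻¹ • 1 = c⁻¹ • (1 - X * S) - c⁻¹ • 1 := by rw [← hS]
    _ = -(c⁻¹ • (X * S)) := by rw [smul_sub]; abel
    _ = -(c⁻¹ • c⁻¹ • (X - X * S * X)) := by rw [← hXS]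
    _ = c⁻¹ ^ 2 • (X * S * X - X) := by rw [smul_smul, ← sq, ← smul_neg, neg_sub]

variable {X : H →L[ℂ] H}

lemma isUnit_smul_one_add {c : ℂ} (hc : 1 ≤ ‖c‖) (hX : ‖X‖ ≤ 1 / 2) : IsUnit (c • 1 + X) := by
  have hlt : ‖-X‖ * ‖(1 : H →L[ℂ] H)‖ < ‖c‖ := by
    have hone : ‖(1 : H →L[ℂ] H)‖ ≤ 1 := norm_id_le
    rw [norm_neg]
    linarith [mul_le_of_le_one_right (norm_nonneg X) hone]
  have hres := spectrum.mem_resolventSet_of_norm_lt_mul hlt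
  rwa [spectrum.mem_resolventSet_iff, Algebra.algebraMap_eq_smul_one, sub_neg_eq_add] at hres

lemma norm_inverse_smul_one_add_le {c : ℂ} (hc : 1 ≤ ‖c‖) (hX : ‖X‖ ≤ 1 / 2) :
    ‖Ring.inverse (c • 1 + X)‖ ≤ 2 := by
  set S := Ring.inverse (c • 1 + X)
  have hS : c • S = 1 - X * S := by
    simpa using eq_sub_of_add_eq ((add_mul (c • 1) X S).symm.trans
      (Ring.mul_inverse_cancel _ (isUnit_smul_one_add hc hX)))
  have hle : ‖c‖ * ‖S‖ ≤ 1 + 1 / 2 * ‖S‖ :=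
    calc ‖c‖ * ‖S‖ = ‖1 - X * S‖ := by rw [← norm_smul, hS]
      _ ≤ ‖(1 : H →L[ℂ] H)‖ + ‖X‖ * ‖S‖ :=
        (norm_sub_le _ _).trans (by gcongr; exact norm_mul_le _ _)
      _ ≤ 1 + 1 / 2 * ‖S‖ := by
        gcongr
        exact norm_id_le
  linarith [le_mul_of_one_le_left (norm_nonneg S) hc]

lemma logIntegrand_one_add {E : Type*} [NormedAddCommGroup E] [InnerProductSpace ℂ E]
    (X : E →L[ℂ] E) (t : ℝ) : logIntegrand (1 + X) t =
      Ring.inverse (((1 : ℂ) + t * I) • 1 + X) - ((1 : ℂ) + t * I)⁻¹ • (1 : E →L[ℂ] E) := by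
  rw [logIntegrand, add_right_comm, add_smul, one_smul]

lemma exists_logIntegrand_one_add_eq (hX : ‖X‖ ≤ 1 / 2) (t : ℝ) : ∃ S : H →L[ℂ] H,
    ‖S‖ ≤ 2 ∧ logIntegrand (1 + X) t = ((1 : ℂ) + t * I)⁻¹ ^ 2 • (X * S * X - X) := by
  have hc := one_le_norm_one_add_mul_I t
  refine ⟨_, norm_inverse_smul_one_add_le hc hX, ?_⟩
  rw [logIntegrand_one_add, inverse_smul_one_add_sub (norm_pos_iff.1 (zero_lt_one.trans_le hc))
    (isUnit_smul_one_add hc hX)]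

lemma norm_logIntegrand_one_add_le (hX : ‖X‖ ≤ 1 / 2) (t : ℝ) :
    ‖logIntegrand (1 + X) t‖ ≤ (1 + t ^ 2)⁻¹ := by
  obtain ⟨S, hS, heq⟩ := exists_logIntegrand_one_add_eq hX t
  rw [heq, norm_smul, norm_inv_one_add_mul_I_sq]
  refine mul_le_of_le_one_right (by positivity) ?_
  calc ‖X * S * X - X‖ ≤ ‖X‖ * ‖S‖ * ‖X‖ + ‖X‖ :=
        (norm_sub_le _ _).trans (by gcongr; exact norm_mul₃_le)
    _ ≤ 1 / 2 * 2 * (1 / 2) + 1 / 2 := by gcongr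
    _ = 1 := by norm_num

lemma continuous_logIntegrand_one_add (hX : ‖X‖ ≤ 1 / 2) : Continuous (logIntegrand (1 + X)) := by
  have hc (t : ℝ) : (1 : ℂ) + t * I ≠ 0 :=
    norm_pos_iff.1 (zero_lt_one.trans_le (one_le_norm_one_add_mul_I t))
  simp only [funext (logIntegrand_one_add X)]
  refine .sub (continuous_iff_continuousAt.2 fun t => ?_) (by fun_prop (disch := exact hc _))
  obtain ⟨u, hu⟩ := isUnit_smul_one_add (one_le_norm_one_add_mul_I t) hX
  exact ContinuousAt.comp' (hu ▸ NormedRing.inverse_continuousAt u) (by fun_prop)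

lemma integrable_logIntegrand_one_add (hX : ‖X‖ ≤ 1 / 2) : Integrable (logIntegrand (1 + X)) :=
  integrable_inv_one_add_sq.mono' (continuous_logIntegrand_one_add hX).aestronglyMeasurable
    (.of_forall (norm_logIntegrand_one_add_le hX))

lemma opLog_one_add (hX : ‖X‖ ≤ 1 / 2) :
    opLog (1 + X) = (-I) • ∫ t in Set.Ioi (0 : ℝ), logIntegrand (1 + X) t :=
  ((intervalIntegral_tendsto_integral_Ioi 0 (integrable_logIntegrand_one_add hX).integrableOn
    tendsto_id).const_smul (-I)).limUnder_eq

lemma norm_inner_adjoint_mul_mul_le (L W : H →L[ℂ] H) (x : H) :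
    ‖⟪x, (adjoint L * W * L) x⟫_ℂ‖ ≤ ‖W‖ * ‖L x‖ ^ 2 :=
  calc ‖⟪x, (adjoint L * W * L) x⟫_ℂ‖ = ‖⟪L x, W (L x)⟫_ℂ‖ :=
        congrArg norm (adjoint_inner_right L x (W (L x)))
    _ ≤ ‖L x‖ * (‖W‖ * ‖L x‖) := (norm_inner_le_norm _ _).trans (by gcongr; exact W.le_opNorm _)
    _ = ‖W‖ * ‖L x‖ ^ 2 := by ring

variable {L Q : H →L[ℂ] H}

lemma norm_adjoint_mul_mul_le (L Q : H →L[ℂ] H) : ‖adjoint L * Q * L‖ ≤ ‖L‖ ^ 2 * ‖Q‖ := by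
  refine norm_mul₃_le.trans_eq ?_
  rw [LinearIsometryEquiv.norm_map]
  ring

lemma norm_inner_logIntegrand_le (hLQ : ‖L‖ ^ 2 * ‖Q‖ ≤ 1 / 2) (x : H) (t : ℝ) :
    ‖⟪x, logIntegrand (1 + adjoint L * Q * L) t x⟫_ℂ‖ ≤
      2 * ‖Q‖ * ‖L x‖ ^ 2 * (1 + t ^ 2)⁻¹ := by
  obtain ⟨S, hS, heq⟩ :=
    exists_logIntegrand_one_add_eq ((norm_adjoint_mul_mul_le L Q).trans hLQ) t
  have hfactor : adjoint L * Q * L * S * (adjoint L * Q * L) - adjoint L * Q * L =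
      adjoint L * (Q * (L * S * adjoint L * Q) - Q) * L := by noncomm_ring
  have hW : ‖Q * (L * S * adjoint L * Q) - Q‖ ≤ 2 * ‖Q‖ :=
    calc ‖Q * (L * S * adjoint L * Q) - Q‖ ≤ ‖Q‖ * (‖L‖ * ‖S‖ * ‖adjoint L‖ * ‖Q‖) + ‖Q‖ := by
          refine (norm_sub_le _ _).trans ?_
          gcongr
          refine (norm_mul_le _ _).trans ?_
          gcongr
          refine (norm_mul_le _ _).trans ?_
          gcongr
          exact norm_mul₃_le
      _ ≤ ‖Q‖ * (‖L‖ * 2 * ‖L‖ * ‖Q‖) + ‖Q‖ := by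
          rw [LinearIsometryEquiv.norm_map]
          gcongr
      _ ≤ 2 * ‖Q‖ := by nlinarith [norm_nonneg Q]
  rw [heq, hfactor, smul_apply, inner_smul_right, norm_mul, norm_inv_one_add_mul_I_sq, mul_comm]
  gcongr
  exact (norm_inner_adjoint_mul_mul_le L _ x).trans (by gcongr)

lemma norm_inner_opLog_one_add_le (hLQ : ‖L‖ ^ 2 * ‖Q‖ ≤ 1 / 2) (x : H) :
    ‖⟪x, opLog (1 + adjoint L * Q * L) x⟫_ℂ‖ ≤ Real.pi * ‖Q‖ * ‖L x‖ ^ 2 := by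
  have hX := (norm_adjoint_mul_mul_le L Q).trans hLQ
  have hint := (integrable_logIntegrand_one_add hX).integrableOn (s := Set.Ioi 0)
  rw [opLog_one_add hX, smul_apply, inner_smul_right, norm_mul, norm_neg, norm_I, one_mul,
    integral_apply hint, ← integral_inner (hint.apply_continuousLinearMap x)]
  calc ‖∫ t in Set.Ioi (0 : ℝ), ⟪x, logIntegrand (1 + adjoint L * Q * L) t x⟫_ℂ‖
      ≤ ∫ t in Set.Ioi (0 : ℝ), 2 * ‖Q‖ * ‖L x‖ ^ 2 * (1 + t ^ 2)⁻¹ :=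
        norm_integral_le_of_norm_le (integrable_inv_one_add_sq.integrableOn.const_mul _)
          (.of_forall (norm_inner_logIntegrand_le hLQ x))
    _ = Real.pi * ‖Q‖ * ‖L x‖ ^ 2 := by
        rw [integral_const_mul, integral_Ioi_inv_one_add_sq, Real.arctan_zero]
        ring

end OperatorLog

section PoissonIntegral

/-- `M x ε` is the (weak) Poisson integral of the operator family `Ξ` at the point `x + iε`. -/
def IsPoissonIntegral (M : ℝ → ℝ → H →L[ℂ] H) (Ξ : ℝ → H →L[ℂ] H) : Prop :=
  ∀ (x ε : ℝ), 0 < ε → ∀ f g : H,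
    ⟪f, M x ε g⟫_ℂ = ∫ y, poissonKernel x ε y • ⟪f, Ξ y g⟫_ℂ

variable {M : ℝ → ℝ → H →L[ℂ] H} {Ξ : ℝ → H →L[ℂ] H}

lemma IsPoissonIntegral.inner_self (hM : IsPoissonIntegral M Ξ) (hΞ : ∀ᵐ l, (Ξ l).IsPositive)
    (x : ℝ) {ε : ℝ} (hε : 0 < ε) (f : H) :
    ⟪f, M x ε f⟫_ℂ = (∫ y, poissonKernel x ε y • (Ξ y).reApplyInnerSelf f : ℝ) := by
  rw [hM x ε hε, ← integral_complex_ofReal]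
  refine integral_congr_ae ?_
  filter_upwards [hΞ] with y hy
  rw [inner_apply_self_eq_reApplyInnerSelf hy, real_smul, smul_eq_mul, ofReal_mul]

lemma IsPoissonIntegral.reApplyInnerSelf (hM : IsPoissonIntegral M Ξ)
    (hΞ : ∀ᵐ l, (Ξ l).IsPositive) (x : ℝ) {ε : ℝ} (hε : 0 < ε) (f : H) :
    (M x ε).reApplyInnerSelf f = ∫ y, poissonKernel x ε y • (Ξ y).reApplyInnerSelf f := by
  rw [reApplyInnerSelf_apply, inner_re_symm, hM.inner_self hΞ x hε]
  exact ofReal_re _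

lemma IsPoissonIntegral.isPositive (hM : IsPoissonIntegral M Ξ) (hΞ : ∀ᵐ l, (Ξ l).IsPositive)
    (x : ℝ) {ε : ℝ} (hε : 0 < ε) : (M x ε).IsPositive := by
  refine (isPositive_iff_complex _).2 fun f => ?_
  rw [← inner_conj_symm, hM.inner_self hΞ x hε, conj_ofReal]
  refine ⟨rfl, integral_nonneg_of_ae ?_⟩
  filter_upwards [hΞ] with y hy
  exact smul_nonneg (poissonKernel_nonneg hε.le y) (hy.2 f)

lemma integrable_inner_of_isPositive (hΞ : ∀ᵐ l, (Ξ l).IsPositive) {f g : H}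
    (hmeas : AEStronglyMeasurable fun l => ⟪f, Ξ l g⟫_ℂ)
    (hf : Integrable fun l => (Ξ l).reApplyInnerSelf f)
    (hg : Integrable fun l => (Ξ l).reApplyInnerSelf g) :
    Integrable fun l => ⟪f, Ξ l g⟫_ℂ := by
  refine (hf.add hg).mono' hmeas ?_
  filter_upwards [hΞ] with l hl
  have hfl := hl.2 f
  have hgl := hl.2 g
  refine le_of_sq_le_sq ((norm_inner_apply_sq_le hl f g).trans ?_) (add_nonneg hfl hgl)
  simp only [Pi.add_apply]
  nlinarith

theorem IsPoissonIntegral.ae_tendsto_traceNorm_sub [SeparableSpace H]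
    (hM : IsPoissonIntegral M Ξ) (hΞ : ∀ᵐ l, (Ξ l).IsPositive)
    (hmeas : ∀ f g : H, AEStronglyMeasurable fun l => ⟪f, Ξ l g⟫_ℂ)
    (hint : ∀ i, Integrable fun l => (Ξ l).reApplyInnerSelf (traceBasis i))
    (hsum : Summable fun i => ∫ l, (Ξ l).reApplyInnerSelf (traceBasis i)) :
    ∀ᵐ x, Tendsto (fun ε => traceNorm (Ξ x - M x ε)) (𝓝[>] 0) (𝓝 0) := by
  have := countable_of_hilbertBasis (traceBasis (H := H))
  have hsum' : Summable fun i => ∫ l, ‖(Ξ l).reApplyInnerSelf (traceBasis i)‖ :=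
    hsum.congr fun i => integral_congr_ae <| hΞ.mono fun l hl =>
      (Real.norm_of_nonneg (hl.2 (traceBasis i))).symm
  have hentry : ∀ᵐ x, ∀ i j, Tendsto
      (fun ε => ∫ y, poissonKernel x ε y • ⟪(traceBasis i : H), Ξ y (traceBasis j)⟫_ℂ)
      (𝓝[>] 0) (𝓝 ⟪(traceBasis i : H), Ξ x (traceBasis j)⟫_ℂ) :=
    ae_all_iff.2 fun i => ae_all_iff.2 fun j => ae_tendsto_integral_poissonKernel_smul
      (integrable_inner_of_isPositive hΞ (hmeas _ _) (hint i) (hint j))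
  filter_upwards [hΞ, ae_summable_of_summable_integral_norm hint hsum', hentry,
    ae_tendsto_tsum_integral_poissonKernel_smul hint hsum'] with x hx hxs hxentry hxtrace
  have hpos : ∀ᶠ ε : ℝ in 𝓝[>] 0, 0 < ε := self_mem_nhdsWithin
  refine tendsto_traceNorm_sub_of_isPositive hx hxs
    (hpos.mono fun ε hε => hM.isPositive hΞ x hε) (hpos.mono fun ε hε => ?_)
    (hxtrace.congr' (hpos.mono fun ε hε => ?_))
    fun i j => (hxentry i j).congr' (hpos.mono fun ε hε => (hM x ε hε _ _).symm)
  · simpa only [hM.reApplyInnerSelf hΞ x hε] using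
      (hasSum_integral_poissonKernel_smul hint hsum' x hε).summable
  · exact tsum_congr fun i => (hM.reApplyInnerSelf hΞ x hε _).symm

end PoissonIntegral

section HerglotzRep

variable {E : Type*} [NormedAddCommGroup E] [InnerProductSpace ℂ E]

/-- The Herglotz representation `G z = ∫ Ξ(λ) (λ - z)⁻¹ dλ` on the upper half-plane, understood
weakly: each matrix entry converges absolutely. -/
def HasHerglotzRep (G : ℂ → E →L[ℂ] E) (Ξ : ℝ → E →L[ℂ] E) : Prop :=
  ∀ z : ℂ, 0 < z.im → ∀ f g : E,
    Integrable (fun l : ℝ => ((l : ℂ) - z)⁻¹ * ⟪f, Ξ l g⟫_ℂ) ∧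
      ⟪f, G z g⟫_ℂ = ∫ l : ℝ, ((l : ℂ) - z)⁻¹ * ⟪f, Ξ l g⟫_ℂ

lemma HasHerglotzRep.congr {G G' : ℂ → E →L[ℂ] E} {Ξ : ℝ → E →L[ℂ] E}
    (hG : HasHerglotzRep G Ξ) (h : ∀ z : ℂ, 0 < z.im → G z = G' z) :
    HasHerglotzRep G' Ξ :=
  fun z hz f g => h z hz ▸ hG z hz f g

lemma HasHerglotzRep.aestronglyMeasurable_inner {G : ℂ → E →L[ℂ] E} {Ξ : ℝ → E →L[ℂ] E}
    (hG : HasHerglotzRep G Ξ) (f g : E) :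
    AEStronglyMeasurable fun l => ⟪f, Ξ l g⟫_ℂ := by
  have hcont : Continuous fun l : ℝ => (l : ℂ) - I := by fun_prop
  have hne (l : ℝ) : (l : ℂ) - I ≠ 0 := fun h => by simpa using congrArg im h
  refine (hcont.aestronglyMeasurable.mul
    (hG I (by simp) f g).1.aestronglyMeasurable).congr (.of_forall fun l => ?_)
  exact mul_inv_cancel_left₀ (hne l) _

lemma inv_two_mul_I_mul_sub_conj (w : ℂ) : (2 * I)⁻¹ * (w - (starRingEnd ℂ) w) = w.im := by
  have hI : 2 * I ≠ 0 := by simp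
  rw [sub_conj, ofReal_mul, ofReal_ofNat, mul_right_comm 2, inv_mul_cancel_left₀ hI]

lemma im_inv_ofReal_sub (x ε y : ℝ) :
    (((y : ℂ) - (x + ε * I))⁻¹).im = Real.pi * poissonKernel x ε y := by
  rw [inv_im, normSq_apply, poissonKernel, mul_inv_cancel_left₀ Real.pi_ne_zero]
  simp
  ring

variable {G : ℂ → H →L[ℂ] H} {Ξ : ℝ → H →L[ℂ] H}

lemma HasHerglotzRep.inner_imPart (hG : HasHerglotzRep G Ξ) (hΞ : ∀ᵐ l, (Ξ l).IsPositive)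
    (x : ℝ) {ε : ℝ} (hε : 0 < ε) (f g : H) :
    Integrable (fun y => poissonKernel x ε y • ⟪f, Ξ y g⟫_ℂ) ∧
      ⟪f, ((Real.pi : ℂ)⁻¹ • imPart (G (x + ε * I))) g⟫_ℂ =
        ∫ y, poissonKernel x ε y • ⟪f, Ξ y g⟫_ℂ := by
  set z : ℂ := x + ε * I
  have hz : 0 < z.im := by simpa [z] using hε
  obtain ⟨hfg, hfg'⟩ := hG z hz f g
  obtain ⟨hgf, hgf'⟩ := hG z hz g f
  have hker : (fun y : ℝ => (Real.pi : ℂ)⁻¹ * ((2 * I)⁻¹ * (((y : ℂ) - z)⁻¹ * ⟪f, Ξ y g⟫_ℂ -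
      (starRingEnd ℂ) (((y : ℂ) - z)⁻¹ * ⟪g, Ξ y f⟫_ℂ)))) =ᵐ[volume]
        fun y => poissonKernel x ε y • ⟪f, Ξ y g⟫_ℂ := by
    filter_upwards [hΞ] with y hy
    rw [map_mul, inner_conj_symm, hy.inner_left_eq_inner_right, ← sub_mul, ← mul_assoc (2 * I)⁻¹,
      inv_two_mul_I_mul_sub_conj, im_inv_ofReal_sub, ofReal_mul, mul_assoc,
      inv_mul_cancel_left₀ (ofReal_ne_zero.2 Real.pi_ne_zero), real_smul]
  have hconj : Integrable fun y : ℝ => (starRingEnd ℂ) (((y : ℂ) - z)⁻¹ * ⟪g, Ξ y f⟫_ℂ) :=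
    conjCLE.toContinuousLinearMap.integrable_comp hgf
  refine ⟨(((hfg.sub hconj).const_mul _).const_mul _).congr hker, ?_⟩
  rw [← integral_congr_ae hker, integral_const_mul, integral_const_mul, integral_sub hfg hconj,
    integral_conj, ← hfg', ← hgf', inner_conj_symm, smul_apply, inner_smul_right, imPart,
    smul_apply, inner_smul_right, sub_apply, inner_sub_right, adjoint_inner_right]

lemma HasHerglotzRep.isPoissonIntegral (hG : HasHerglotzRep G Ξ)
    (hΞ : ∀ᵐ l, (Ξ l).IsPositive) :
    IsPoissonIntegral (fun x ε => (Real.pi : ℂ)⁻¹ • imPart (G (x + ε * I))) Ξ :=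
  fun x _ hε f g => (hG.inner_imPart hΞ x hε f g).2

lemma reApplyInnerSelf_inv_pi_smul_imPart (T : H →L[ℂ] H) (f : H) :
    ((Real.pi : ℂ)⁻¹ • imPart T).reApplyInnerSelf f = Real.pi⁻¹ * (⟪f, T f⟫_ℂ).im := by
  rw [reApplyInnerSelf_apply, inner_re_symm, smul_apply, inner_smul_right, imPart, smul_apply,
    inner_smul_right, sub_apply, inner_sub_right, adjoint_inner_right, ← inner_conj_symm (T f),
    inv_two_mul_I_mul_sub_conj, ← ofReal_inv, ← ofReal_mul]
  exact ofReal_re _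

lemma HasHerglotzRep.integrable_and_integral_le (hG : HasHerglotzRep G Ξ)
    (hΞ : ∀ᵐ l, (Ξ l).IsPositive) {f : H} {C : ℝ}
    (hdecay : ∀ᶠ y : ℝ in atTop, ‖⟪f, G (y * I) f⟫_ℂ‖ ≤ C / y) :
    Integrable (fun l => (Ξ l).reApplyInnerSelf f) ∧ ∫ l, (Ξ l).reApplyInnerSelf f ≤ 2 * C := by
  have hre : (fun l => (⟪f, Ξ l f⟫_ℂ).re) =ᵐ[volume] fun l => (Ξ l).reApplyInnerSelf f := by
    filter_upwards [hΞ] with l hl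
    rw [inner_apply_self_eq_reApplyInnerSelf hl, ofReal_re]
  have hmeas := (continuous_re.comp_aestronglyMeasurable (hG.aestronglyMeasurable_inner f f)).congr
    hre
  obtain ⟨hint, hle⟩ := integrable_and_integral_le_of_poissonKernel_decay (C := Real.pi⁻¹ * C)
    hmeas (hΞ.mono fun l hl => hl.2 f) <| by
      filter_upwards [hdecay, eventually_gt_atTop 0] with y hy hypos
      refine ⟨(hG.inner_imPart hΞ 0 hypos f f).1.re.congr ?_, ?_⟩
      · filter_upwards [hre] with l hl
        rw [real_smul]
        exact (re_ofReal_mul _ _).trans (congrArg _ hl)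
      · refine ((hG.isPoissonIntegral hΞ).reApplyInnerSelf hΞ 0 hypos f).symm.trans_le ?_
        rw [reApplyInnerSelf_inv_pi_smul_imPart, ofReal_zero, zero_add, mul_div_assoc]
        gcongr
        exact (le_abs_self _).trans ((abs_im_le_norm _).trans hy)
  refine ⟨hint, hle.trans_eq ?_⟩
  rw [mul_assoc 2, mul_inv_cancel_left₀ Real.pi_ne_zero]

theorem HasHerglotzRep.ae_tendsto_traceNorm_sub [SeparableSpace H] (hG : HasHerglotzRep G Ξ)
    (hΞ : ∀ᵐ l, (Ξ l).IsPositive) {L : H →L[ℂ] H} (hL : IsHilbertSchmidt L) {C : ℝ}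
    (hdecay : ∀ᶠ y : ℝ in atTop, ∀ f : H, ‖⟪f, G (y * I) f⟫_ℂ‖ ≤ C * ‖L f‖ ^ 2 / y) :
    ∀ᵐ x : ℝ, Tendsto (fun ε : ℝ => traceNorm (Ξ x - (Real.pi : ℂ)⁻¹ • imPart (G (x + ε * I))))
      (𝓝[>] 0) (𝓝 0) := by
  have hdiag (f : H) := hG.integrable_and_integral_le hΞ (hdecay.mono fun y hy => hy f)
  refine (hG.isPoissonIntegral hΞ).ae_tendsto_traceNorm_sub hΞ hG.aestronglyMeasurable_inner
    (fun i => (hdiag _).1) ?_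
  refine (((hL _ traceBasis).mul_left C).mul_left 2).of_nonneg_of_le (fun i => ?_)
    fun i => (hdiag _).2
  exact integral_nonneg_of_ae (hΞ.mono fun l hl => hl.2 _)

end HerglotzRep

section LogarithmOfPerturbation

lemma eventually_norm_inner_opLog_le (L : H →L[ℂ] H) {Q : ℝ → H →L[ℂ] H}
    (hQ : ∀ᶠ y : ℝ in atTop, ‖Q y‖ ≤ y⁻¹) :
    ∀ᶠ y : ℝ in atTop, ∀ f : H,
      ‖⟪f, opLog (1 + adjoint L * Q y * L) f⟫_ℂ‖ ≤ Real.pi * ‖L f‖ ^ 2 / y := by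
  have hsmall : ∀ᶠ y : ℝ in atTop, ‖L‖ ^ 2 * y⁻¹ ≤ 1 / 2 := by
    have hlim := tendsto_inv_atTop_zero.const_mul (‖L‖ ^ 2)
    rw [mul_zero] at hlim
    exact hlim.eventually_le_const one_half_pos
  filter_upwards [hQ, hsmall] with y hy hLy f
  refine (norm_inner_opLog_one_add_le (le_trans (by gcongr) hLy) f).trans ?_
  rw [div_eq_mul_inv, mul_right_comm]
  gcongr

lemma eventually_norm_resolvent_mul_I_le (A : SelfAdjointOp H) :
    ∀ᶠ y : ℝ in atTop, ‖A.resolvent (y * I)‖ ≤ y⁻¹ := by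
  filter_upwards [eventually_gt_atTop 0] with y hy
  simpa [abs_of_pos hy] using norm_resolvent_le A (z := y * I) (by simpa using hy.ne')

lemma norm_inner_opLogAnti_one_sub (L Q : H →L[ℂ] H) (f : H) :
    ‖⟪f, opLogAnti (1 - adjoint L * Q * L) f⟫_ℂ‖ =
      ‖⟪f, opLog (1 + adjoint L * -adjoint Q * L) f⟫_ℂ‖ := by
  have hadj : adjoint (1 - adjoint L * Q * L) = 1 + adjoint L * -adjoint Q * L := by
    simp only [← star_eq_adjoint, star_sub, star_one, star_mul, star_star, mul_neg, neg_mul,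
      mul_assoc, ← sub_eq_add_neg]
  rw [opLogAnti, hadj, adjoint_inner_right, norm_inner_symm]

lemma imPart_neg (T : H →L[ℂ] H) : imPart (-T) = -imPart T := by
  simp only [imPart, map_neg, ← smul_neg, neg_sub_neg, neg_sub]

variable [SeparableSpace H] (A : SelfAdjointOp H) {L : H →L[ℂ] H} {Ξ : ℝ → H →L[ℂ] H}

theorem ae_tendsto_traceNorm_sub_opLog_one_add (hL : IsHilbertSchmidt L)
    (hΞ : ∀ᵐ l, (Ξ l).IsPositive)
    (hrep : HasHerglotzRep (fun z => opLog (1 + adjoint L * A.resolvent z * L)) Ξ) :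
    ∀ᵐ x : ℝ, Tendsto (fun ε : ℝ => traceNorm (Ξ x - (Real.pi : ℂ)⁻¹ •
      imPart (opLog (1 + adjoint L * A.resolvent (x + ε * I) * L)))) (𝓝[>] 0) (𝓝 0) :=
  hrep.ae_tendsto_traceNorm_sub hΞ hL
    (eventually_norm_inner_opLog_le L (eventually_norm_resolvent_mul_I_le A))

theorem ae_tendsto_traceNorm_add_opLogAnti_one_sub (hL : IsHilbertSchmidt L)
    (hΞ : ∀ᵐ l, (Ξ l).IsPositive)
    (hrep : HasHerglotzRep (fun z => -opLogAnti (1 - adjoint L * A.resolvent z * L)) Ξ) :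
    ∀ᵐ x : ℝ, Tendsto (fun ε : ℝ => traceNorm (Ξ x + (Real.pi : ℂ)⁻¹ •
      imPart (opLogAnti (1 - adjoint L * A.resolvent (x + ε * I) * L)))) (𝓝[>] 0) (𝓝 0) := by
  have hQ : ∀ᶠ y : ℝ in atTop, ‖-adjoint (A.resolvent (y * I))‖ ≤ y⁻¹ := by
    simpa only [norm_neg, LinearIsometryEquiv.norm_map] using eventually_norm_resolvent_mul_I_le A
  have hlim := hrep.ae_tendsto_traceNorm_sub hΞ hL (C := Real.pi) <| by
    simpa only [neg_apply, inner_neg_right, norm_neg, norm_inner_opLogAnti_one_sub] using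
      eventually_norm_inner_opLog_le L hQ
  simpa only [imPart_neg, smul_neg, sub_neg_eq_add] using hlim

end LogarithmOfPerturbation

section PhiPlusMinus

variable {J : H →L[ℂ] H}

lemma isSelfAdjoint_Jplus (hJ : IsSelfAdjoint J) : IsSelfAdjoint (Jplus J) :=
  IsSelfAdjoint.smul (isSelfAdjoint_iff.2 (by simp)) ((IsSelfAdjoint.one _).add hJ)

lemma isSelfAdjoint_Jminus (hJ : IsSelfAdjoint J) : IsSelfAdjoint (Jminus J) :=
  IsSelfAdjoint.smul (isSelfAdjoint_iff.2 (by simp)) ((IsSelfAdjoint.one _).sub hJ)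

lemma adjoint_mul_of_isSelfAdjoint (K : H →L[ℂ] H) {P : H →L[ℂ] H} (hP : IsSelfAdjoint P) :
    adjoint (K * P) = P * adjoint K := by
  rw [← star_eq_adjoint, star_mul, hP.star_eq, star_eq_adjoint]

lemma PhiPlus_eq_one_add (H0 : SelfAdjointOp H) (hJ : IsSelfAdjoint J) (K : H →L[ℂ] H) (z : ℂ) :
    PhiPlus H0 J K z = 1 + adjoint (K * Jplus J) * H0.resolvent z * (K * Jplus J) := by
  simp only [PhiPlus, adjoint_mul_of_isSelfAdjoint K (isSelfAdjoint_Jplus hJ), mul_assoc]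

lemma PhiMinusT_eq_one_sub (Hp : SelfAdjointOp H) (hJ : IsSelfAdjoint J) (K : H →L[ℂ] H)
    (z : ℂ) :
    PhiMinusT Hp J K z = 1 - adjoint (K * Jminus J) * Hp.resolvent z * (K * Jminus J) := by
  simp only [PhiMinusT, adjoint_mul_of_isSelfAdjoint K (isSelfAdjoint_Jminus hJ), mul_assoc]

end PhiPlusMinus

theorem spectral_shift_operator_boundary_values_general [SeparableSpace H]
    (H0 Hp : SelfAdjointOp H) {J K : H →L[ℂ] H} (hJ : IsSelfAdjoint J) (hK : IsHilbertSchmidt K)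
    {Ξp Ξm : ℝ → H →L[ℂ] H} (hposp : ∀ᵐ l, (Ξp l).IsPositive) (hposm : ∀ᵐ l, (Ξm l).IsPositive)
    (hrepp : HasHerglotzRep (logHerg (PhiPlus H0 J K)) Ξp)
    (hrepm : HasHerglotzRep (fun z => -logAntiHerg (PhiMinusT Hp J K) z) Ξm) :
    ∀ᵐ l : ℝ,
      Tendsto (fun ε : ℝ => traceNorm (Ξp l - (Real.pi : ℂ)⁻¹ •
        imPart (opLog (PhiPlus H0 J K (l + ε * I))))) (𝓝[>] 0) (𝓝 0) ∧
      Tendsto (fun ε : ℝ => traceNorm (Ξm l + (Real.pi : ℂ)⁻¹ •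
        imPart (opLogAnti (PhiMinusT Hp J K (l + ε * I))))) (𝓝[>] 0) (𝓝 0) := by
  have hlogp := hrepp.congr (G' := fun z => opLog (PhiPlus H0 J K z)) fun z hz => if_pos hz
  have hlogm := hrepm.congr (G' := fun z => -opLogAnti (PhiMinusT Hp J K z)) fun z hz =>
    congrArg Neg.neg (if_pos hz)
  simp only [PhiPlus_eq_one_add H0 hJ] at hlogp ⊢
  simp only [PhiMinusT_eq_one_sub Hp hJ] at hlogm ⊢
  exact (ae_tendsto_traceNorm_sub_opLog_one_add H0
    (isHilbertSchmidt_mul_right hK (Jplus J)) hposp hlogp).and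
    (ae_tendsto_traceNorm_add_opLogAnti_one_sub Hp
      (isHilbertSchmidt_mul_right hK (Jminus J)) hposm hlogm)

/-- Lemma 3.4 (boundary values): for a.e. `λ ∈ ℝ` the spectral shift operators are the
trace-norm limits `Ξ₊(λ) = lim_{ε↓0} π⁻¹ Im log Φ₊(λ+iε)` and
`Ξ₋(λ) = -lim_{ε↓0} π⁻¹ Im log Φ̃₋(λ+iε)`. -/
theorem spectral_shift_operator_boundary_values [SeparableSpace H]
    (H0 Hp : SelfAdjointOp H) (J K : H →L[ℂ] H)
    (hJ : IsSelfAdjoint J) (hJ2 : J * J = 1) (hK : IsHilbertSchmidt K)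
    (hsump : IsSumOf Hp H0 (K * Jplus J * ContinuousLinearMap.adjoint K))
    (Ξp Ξm : ℝ → H →L[ℂ] H)
    (hmeasp : ∀ f g : H, Measurable fun l : ℝ => ⟪f, Ξp l g⟫_ℂ)
    (hmeasm : ∀ f g : H, Measurable fun l : ℝ => ⟪f, Ξm l g⟫_ℂ)
    (hbdp : ∀ᵐ l ∂(volume : Measure ℝ),
      (Ξp l).IsPositive ∧ ((1 : H →L[ℂ] H) - Ξp l).IsPositive ∧ IsTraceClass (Ξp l))
    (hbdm : ∀ᵐ l ∂(volume : Measure ℝ),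
      (Ξm l).IsPositive ∧ ((1 : H →L[ℂ] H) - Ξm l).IsPositive ∧ IsTraceClass (Ξm l))
    (hrepp : ∀ z : ℂ, z.im ≠ 0 → ∀ f g : H,
      Integrable (fun l : ℝ => ((l : ℂ) - z)⁻¹ * ⟪f, Ξp l g⟫_ℂ) ∧
      ⟪f, logHerg (PhiPlus H0 J K) z g⟫_ℂ =
        ∫ l : ℝ, ((l : ℂ) - z)⁻¹ * ⟪f, Ξp l g⟫_ℂ)
    (hrepm : ∀ z : ℂ, z.im ≠ 0 → ∀ f g : H,
      Integrable (fun l : ℝ => ((l : ℂ) - z)⁻¹ * ⟪f, Ξm l g⟫_ℂ) ∧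
      ⟪f, logAntiHerg (PhiMinusT Hp J K) z g⟫_ℂ =
        -∫ l : ℝ, ((l : ℂ) - z)⁻¹ * ⟪f, Ξm l g⟫_ℂ) :
    ∀ᵐ l ∂(volume : Measure ℝ),
      Tendsto (fun ε : ℝ => traceNorm (Ξp l - ((Real.pi : ℂ))⁻¹ •
          imPart (opLog (PhiPlus H0 J K ((l : ℂ) + (ε : ℂ) * Complex.I)))))
        (𝓝[>] (0 : ℝ)) (𝓝 0) ∧
      Tendsto (fun ε : ℝ => traceNorm (Ξm l + ((Real.pi : ℂ))⁻¹ •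
          imPart (opLogAnti (PhiMinusT Hp J K ((l : ℂ) + (ε : ℂ) * Complex.I)))))
        (𝓝[>] (0 : ℝ)) (𝓝 0) :=
  spectral_shift_operator_boundary_values_general H0 Hp hJ hK (hbdp.mono fun _ h => h.1)
    (hbdm.mono fun _ h => h.1) (fun z hz => hrepp z hz.ne') fun z hz f g =>
      ⟨(hrepm z hz.ne' f g).1, by rw [neg_apply, inner_neg_right, (hrepm z hz.ne' f g).2, neg_neg]⟩

end SpectralShift
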